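/- arXiv:2601.10197 — 2 statements merged into one kernel-verified Lean document; each statement's English description precedes it below -/
import Mathlib

section
/- Let d = 2m ≥ 4 be an even integer, let J be the canonical d×d symplectic form, and let A be any d×d complex matrix. Then the entrywise (Bochner) integral over the Haar probability measure on U(d) satisfies ∫_{U(d)} (J Uᵀ Jᵀ U) A (J Uᵀ Jᵀ U)† dμ(U) = (tr(A)·I_d + J Aᵀ J)/(d−1). -/
/-! Write `W = Uᵀ K U` with `K = Jᵀ`, an antisymmetric unitary matrix.  Everything reduces to the
second moments `E[W a b * conj (W c e)]`, which equal
`(δ a c * δ b e - δ a e * δ b c) / (d - 1)` (lemma `integral_conjForm`).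

These moments are determined by right invariance of Haar measure, which holds on `U(d)` because a
right translate of a Haar probability measure is again one.  Translating by `V` replaces `W` by
`Vᵀ W V`.  Taking for `V` a diagonal matrix with a single entry `-1` kills every moment in which
an index occurs once; taking for `V` a transposition matrix shows that `E|W a b|²` does not depend
on `b ≠ a`.  Since `W` is antisymmetric (so `W a a = 0`) and unitary (so each row has norm one),
`E|W a b|² = 1 / (d - 1)` for `b ≠ a`.  Contracting with `A` gives
`E[W A W†] = (tr A - Aᵀ) / (d - 1)`, and conjugation by `J` gives the result. -/

open MeasureTheory Matrix

/-- The entrywise (product) measurable structure on matrices. -/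
instance matrixMeasurableSpace {m' n' α : Type*} [MeasurableSpace α] :
    MeasurableSpace (Matrix m' n' α) :=
  (inferInstance : MeasurableSpace (m' → n' → α))

/-- The canonical `2m × 2m` symplectic form `J = [[0, Iₘ],[−Iₘ, 0]]`. -/
noncomputable def sympJ (m : ℕ) (R : Type*) [Ring R] : Matrix (Fin (2 * m)) (Fin (2 * m)) R :=
  Matrix.reindex (finSumFinEquiv.trans (finCongr (two_mul m).symm))
    (finSumFinEquiv.trans (finCongr (two_mul m).symm))
    (Matrix.fromBlocks 0 1 (-1) 0)

section Twirl

variable {n : Type*} [Fintype n] [DecidableEq n]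

instance matrixBorelSpace : BorelSpace (Matrix n n ℂ) :=
  inferInstanceAs (BorelSpace (n → n → ℂ))

instance matrixSecondCountable : SecondCountableTopology (Matrix n n ℂ) :=
  inferInstanceAs (SecondCountableTopology (n → n → ℂ))

instance unitaryGroupBorelSpace : BorelSpace (Matrix.unitaryGroup n ℂ) :=
  inferInstanceAs (BorelSpace {x : Matrix n n ℂ // x ∈ Matrix.unitaryGroup n ℂ})

instance unitaryGroupTopologicalGroup : IsTopologicalGroup (Matrix.unitaryGroup n ℂ) :=
  inferInstanceAs (IsTopologicalGroup (unitary (Matrix n n ℂ)))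

lemma isClosed_unitaryGroup :
    IsClosed {x : Matrix n n ℂ | x ∈ Matrix.unitaryGroup n ℂ} := by
  have h : {x : Matrix n n ℂ | x ∈ Matrix.unitaryGroup n ℂ} = {x | x * star x = 1} := by
    ext x
    exact Matrix.mem_unitaryGroup_iff
  rw [h]
  exact isClosed_eq (by fun_prop) continuous_const

instance unitaryGroupLocallyCompact : LocallyCompactSpace (Matrix.unitaryGroup n ℂ) := by
  have : LocallyCompactSpace (Matrix n n ℂ) :=
    inferInstanceAs (LocallyCompactSpace (n → n → ℂ))
  exact (isClosed_unitaryGroup (n := n)).isClosedEmbedding_subtypeVal.locallyCompactSpace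

/-- A Haar probability measure on the unitary group is right invariant: its right translates are
again Haar probability measures, and those are unique. -/
lemma unitaryGroup_isMulRightInvariant (μ : Measure (Matrix.unitaryGroup n ℂ))
    [μ.IsHaarMeasure] [IsProbabilityMeasure μ] : μ.IsMulRightInvariant where
  map_mul_right_eq_self g := by
    have : IsProbabilityMeasure (μ.map (· * g)) :=
      Measure.isProbabilityMeasure_map (by fun_prop)
    have : (μ.map (· * g)).IsHaarMeasure := Measure.isHaarMeasure_map_mul_right μ g
    exact Measure.isHaarMeasure_eq_of_isProbabilityMeasure _ _

/-- The transform `Uᵀ K U` of the bilinear form `K` under the change of basis `U`. -/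
def conjForm (K : Matrix n n ℂ) (U : Matrix.unitaryGroup n ℂ) : Matrix n n ℂ :=
  (U : Matrix n n ℂ)ᵀ * K * (U : Matrix n n ℂ)

lemma conjForm_mul (K : Matrix n n ℂ) (U V : Matrix.unitaryGroup n ℂ) :
    conjForm K (U * V) = (V : Matrix n n ℂ)ᵀ * conjForm K U * (V : Matrix n n ℂ) := by
  simp [conjForm, Matrix.mul_assoc]

lemma conjForm_antisymm {K : Matrix n n ℂ} (hK : Kᵀ = -K) (U : Matrix.unitaryGroup n ℂ)
    (a b : n) : conjForm K U a b = -conjForm K U b a := by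
  have h : (conjForm K U)ᵀ = -conjForm K U := by
    simp [conjForm, hK, Matrix.mul_assoc]
  exact congrFun (congrFun h b) a

lemma conjForm_mem {K : Matrix n n ℂ} (hK : K ∈ Matrix.unitaryGroup n ℂ)
    (U : Matrix.unitaryGroup n ℂ) : conjForm K U ∈ Matrix.unitaryGroup n ℂ := by
  refine mul_mem (mul_mem ?_ hK) U.2
  have h := Matrix.mem_unitaryGroup_iff'.1 U.2
  rw [Matrix.mem_unitaryGroup_iff]
  have h2 := congrArg Matrix.transpose h
  rw [Matrix.transpose_mul, Matrix.transpose_one] at h2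
  exact h2

lemma continuous_conjForm (K : Matrix n n ℂ) : Continuous (conjForm K) := by
  unfold conjForm
  fun_prop

/-- The integrand of the second moments of `Uᵀ K U`. -/
def momentFun (K : Matrix n n ℂ) (a b c e : n) (U : Matrix.unitaryGroup n ℂ) : ℂ :=
  conjForm K U a b * star (conjForm K U c e)

lemma integrable_momentFun {K : Matrix n n ℂ} (hK : K ∈ Matrix.unitaryGroup n ℂ)
    (μ : Measure (Matrix.unitaryGroup n ℂ)) [IsProbabilityMeasure μ] (a b c e : n) :
    Integrable (momentFun K a b c e) μ := by
  have hc : Continuous (momentFun K a b c e) := by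
    unfold momentFun
    have := continuous_conjForm K
    exact (this.matrix_elem a b).mul (this.matrix_elem c e).star
  refine Integrable.of_bound hc.measurable.aestronglyMeasurable 1 (Filter.Eventually.of_forall ?_)
  intro U
  have h1 := entry_norm_bound_of_unitary (conjForm_mem hK U) a b
  have h2 := entry_norm_bound_of_unitary (conjForm_mem hK U) c e
  rw [momentFun, norm_mul, norm_star]
  exact mul_le_one₀ h1 (norm_nonneg _) h2

/-- The diagonal matrix with entry `-1` at `c` and `1` elsewhere, as a unitary matrix. -/
def signFlip (c : n) : Matrix.unitaryGroup n ℂ :=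
  ⟨Matrix.diagonal fun k => if k = c then -1 else 1, by
    rw [Matrix.mem_unitaryGroup_iff, Matrix.star_eq_conjTranspose, Matrix.diagonal_conjTranspose,
      Matrix.diagonal_mul_diagonal, ← Matrix.diagonal_one]
    congr 1
    ext k
    by_cases h : k = c <;> simp [h]⟩

/-- The permutation matrix of the transposition `(b b')`, as a unitary matrix. -/
def swapUnitary (b b' : n) : Matrix.unitaryGroup n ℂ :=
  ⟨(Equiv.swap b b').toPEquiv.toMatrix, by
    rw [Matrix.mem_unitaryGroup_iff, Matrix.star_eq_conjTranspose]
    ext i j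
    simp [PEquiv.toMatrix_toPEquiv_mul, PEquiv.toMatrix_apply, Matrix.one_apply]⟩

lemma conjForm_signFlip (K : Matrix n n ℂ) (U : Matrix.unitaryGroup n ℂ) (c a b : n) :
    conjForm K (U * signFlip c) a b =
      (if a = c then -1 else 1) * conjForm K U a b * (if b = c then -1 else 1) := by
  rw [conjForm_mul]
  simp only [signFlip, Matrix.diagonal_transpose, Matrix.mul_diagonal, Matrix.diagonal_mul]

lemma conjForm_swap (K : Matrix n n ℂ) (U : Matrix.unitaryGroup n ℂ) (s t a b : n) :
    conjForm K (U * swapUnitary s t) a b =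
      conjForm K U (Equiv.swap s t a) (Equiv.swap s t b) := by
  rw [conjForm_mul]
  simp only [swapUnitary, ← PEquiv.toMatrix_symm, ← Equiv.toPEquiv_symm, Equiv.symm_swap,
    PEquiv.toMatrix_toPEquiv_mul, PEquiv.mul_toMatrix_toPEquiv, Matrix.submatrix_apply, id]

/-- Flipping the sign of the basis vector `c` negates the integrand when `c` occurs exactly once
among the four indices. -/
lemma integral_momentFun_eq_zero (K : Matrix n n ℂ)
    (μ : Measure (Matrix.unitaryGroup n ℂ)) [μ.IsMulRightInvariant]
    {a b c e : n} (ha : a ≠ c) (hb : b ≠ c) (he : e ≠ c) :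
    ∫ U, momentFun K a b c e U ∂μ = 0 := by
  refine integral_eq_zero_of_mul_right_eq_neg (g := signFlip c) fun U => ?_
  simp [momentFun, conjForm_signFlip, ha, hb, he]

lemma integral_momentFun_eq (K : Matrix n n ℂ)
    (μ : Measure (Matrix.unitaryGroup n ℂ)) [μ.IsMulRightInvariant]
    {a b b' : n} (hb : a ≠ b) (hb' : a ≠ b') :
    ∫ U, momentFun K a b a b U ∂μ = ∫ U, momentFun K a b' a b' U ∂μ := by
  rw [← integral_mul_right_eq_self (momentFun K a b a b) (swapUnitary b b')]
  simp only [momentFun, conjForm_swap, Equiv.swap_apply_of_ne_of_ne hb hb', Equiv.swap_apply_left]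

lemma integral_momentFun_diag {K : Matrix n n ℂ} (hK : Kᵀ = -K)
    (hKu : K ∈ Matrix.unitaryGroup n ℂ)
    (μ : Measure (Matrix.unitaryGroup n ℂ)) [IsProbabilityMeasure μ] [μ.IsMulRightInvariant]
    {a b : n} (hab : a ≠ b) :
    ∫ U, momentFun K a b a b U ∂μ = ((Fintype.card n : ℂ) - 1)⁻¹ := by
  have hrow : ∑ k, ∫ U, momentFun K a k a k U ∂μ = 1 := by
    rw [← integral_finsetSum _ fun k _ => integrable_momentFun hKu μ a k a k]
    have h1 : ∀ U, ∑ k, momentFun K a k a k U = 1 := by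
      intro U
      have h := congrFun (congrFun (Matrix.mem_unitaryGroup_iff.1 (conjForm_mem hKu U)) a) a
      rw [Matrix.mul_apply, Matrix.one_apply_eq] at h
      exact h
    simp [h1]
  have hzero : ∫ U, momentFun K a a a a U ∂μ = 0 := by
    have : ∀ U, momentFun K a a a a U = 0 := by
      intro U
      have h : conjForm K U a a = 0 := self_eq_neg.1 (conjForm_antisymm hK U a a)
      simp [momentFun, h]
    simp [this]
  rw [← Finset.add_sum_erase _ _ (Finset.mem_univ a), hzero, zero_add,
    Finset.sum_congr rfl (fun k hk =>
      integral_momentFun_eq K μ (Finset.ne_of_mem_erase hk).symm hab),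
    Finset.sum_const, Finset.card_erase_of_mem (Finset.mem_univ a), Finset.card_univ,
    nsmul_eq_mul, Nat.cast_sub (Fintype.card_pos_iff.2 ⟨a⟩), Nat.cast_one] at hrow
  exact eq_inv_of_mul_eq_one_right hrow

/-- The second moments of `Uᵀ K U` for `K` antisymmetric and unitary. -/
lemma integral_conjForm {K : Matrix n n ℂ} (hK : Kᵀ = -K)
    (hKu : K ∈ Matrix.unitaryGroup n ℂ)
    (μ : Measure (Matrix.unitaryGroup n ℂ)) [IsProbabilityMeasure μ] [μ.IsMulRightInvariant]
    (a b c e : n) :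
    ∫ U, momentFun K a b c e U ∂μ = ((Fintype.card n : ℂ) - 1)⁻¹ *
      ((if a = c then 1 else 0) * (if b = e then 1 else 0) -
        (if a = e then 1 else 0) * (if b = c then 1 else 0)) := by
  have hself : ∀ U k, conjForm K U k k = 0 := fun U k =>
    self_eq_neg.1 (conjForm_antisymm hK U k k)
  have hswap : ∫ U, momentFun K a b c e U ∂μ = -∫ U, momentFun K a b e c U ∂μ := by
    rw [← integral_neg]
    congr 1
    ext U
    rw [momentFun, momentFun, conjForm_antisymm hK U c e, star_neg, mul_neg]
  by_cases hab : a = b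
  · subst hab
    have : ∀ U, momentFun K a a c e U = 0 := fun U => by simp [momentFun, hself]
    simp only [this, integral_zero]
    ring
  by_cases hce : c = e
  · subst hce
    have : ∀ U, momentFun K a b c c U = 0 := fun U => by simp [momentFun, hself]
    simp [this]
  by_cases hac : a = c
  · subst hac
    by_cases hbe : b = e
    · subst hbe
      rw [integral_momentFun_diag hK hKu μ hab]
      simp [hab]
    · rw [hswap, integral_momentFun_eq_zero K μ hce hbe hce]
      simp [hbe, hce]
  · by_cases hbc : b = c
    · subst hbc
      by_cases hae : a = e
      · subst hae
        rw [hswap, integral_momentFun_diag hK hKu μ hab]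
        simp [hab]
      · rw [hswap, integral_momentFun_eq_zero K μ hae hce hce]
        simp [hae, hac]
    · rw [integral_momentFun_eq_zero K μ hac hbc (Ne.symm hce)]
      simp [hac, hbc]

/-- The twirl `E[W A W†] = (tr A - Aᵀ) / (d - 1)` for `W = Uᵀ K U`, conjugated by a fixed matrix
`L`. -/
lemma integral_twirl {K : Matrix n n ℂ} (hK : Kᵀ = -K)
    (hKu : K ∈ Matrix.unitaryGroup n ℂ)
    (μ : Measure (Matrix.unitaryGroup n ℂ)) [IsProbabilityMeasure μ] [μ.IsMulRightInvariant]
    (L A : Matrix n n ℂ) (i j : n) :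
    ∫ U, (L * (conjForm K U * A * (conjForm K U)ᴴ) * Lᴴ) i j ∂μ =
      (((Fintype.card n : ℂ) - 1)⁻¹ • (L * (A.trace • (1 : Matrix n n ℂ) - Aᵀ) * Lᴴ)) i j := by
  have hW : ∀ a c, Integrable (fun U => (conjForm K U * A * (conjForm K U)ᴴ) a c) μ ∧
      ∫ U, (conjForm K U * A * (conjForm K U)ᴴ) a c ∂μ =
        ((Fintype.card n : ℂ) - 1)⁻¹ * (A.trace • (1 : Matrix n n ℂ) - Aᵀ) a c := by
    intro a c
    have hexp : ∀ U, (conjForm K U * A * (conjForm K U)ᴴ) a c =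
        ∑ e, ∑ b, A b e * momentFun K a b c e U := by
      intro U
      simp only [Matrix.mul_apply, Matrix.conjTranspose_apply, Finset.sum_mul, momentFun]
      refine Finset.sum_congr rfl fun e _ => Finset.sum_congr rfl fun b _ => ?_
      ring
    have hint : ∀ e b, Integrable (fun U => A b e * momentFun K a b c e U) μ :=
      fun e b => (integrable_momentFun hKu μ a b c e).const_mul _
    simp only [hexp]
    refine ⟨integrable_finsetSum _ fun e _ => integrable_finsetSum _ fun b _ => hint e b, ?_⟩
    rw [integral_finsetSum _ fun e _ => integrable_finsetSum _ fun b _ => hint e b]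
    simp only [integral_finsetSum _ fun b _ => hint _ b, integral_const_mul,
      integral_conjForm hK hKu μ, mul_sub, Finset.sum_sub_distrib, Matrix.sub_apply,
      Matrix.smul_apply, Matrix.transpose_apply, Matrix.one_apply, Matrix.trace, Matrix.diag,
      smul_eq_mul]
    congr 1
    · by_cases hac : a = c <;> simp [hac, mul_comm, Finset.mul_sum]
    · simp [mul_comm]
  have hexp : ∀ X : Matrix n n ℂ, (L * X * Lᴴ) i j = ∑ c, ∑ a, L i a * Lᴴ c j * X a c := by
    intro X
    simp only [Matrix.mul_apply, Finset.sum_mul]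
    refine Finset.sum_congr rfl fun e _ => Finset.sum_congr rfl fun b _ => ?_
    ring
  have hint : ∀ c a, Integrable
      (fun U => L i a * Lᴴ c j * (conjForm K U * A * (conjForm K U)ᴴ) a c) μ :=
    fun c a => (hW a c).1.const_mul _
  rw [Matrix.smul_apply]
  simp only [hexp]
  rw [integral_finsetSum _ fun e _ => integrable_finsetSum _ fun b _ => hint e b]
  simp only [integral_finsetSum _ fun b _ => hint _ b, integral_const_mul, (hW _ _).2,
    smul_eq_mul, Finset.mul_sum]
  refine Finset.sum_congr rfl fun e _ => Finset.sum_congr rfl fun b _ => ?_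
  ring

end Twirl

lemma sympJ_transpose (m : ℕ) : (sympJ m ℂ)ᵀ = -sympJ m ℂ := by
  have h : (Matrix.fromBlocks 0 1 (-1) 0 : Matrix (Fin m ⊕ Fin m) (Fin m ⊕ Fin m) ℂ)ᵀ =
      -Matrix.fromBlocks 0 1 (-1) 0 := by
    rw [Matrix.fromBlocks_transpose, Matrix.fromBlocks_neg]
    simp
  rw [sympJ, Matrix.transpose_reindex, h]
  rfl

lemma sympJ_conjTranspose (m : ℕ) : (sympJ m ℂ)ᴴ = -sympJ m ℂ := by
  have h : (Matrix.fromBlocks 0 1 (-1) 0 : Matrix (Fin m ⊕ Fin m) (Fin m ⊕ Fin m) ℂ)ᴴ =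
      -Matrix.fromBlocks 0 1 (-1) 0 := by
    rw [Matrix.fromBlocks_conjTranspose, Matrix.fromBlocks_neg]
    simp
  rw [sympJ, Matrix.conjTranspose_reindex, h]
  rfl

lemma sympJ_mul_self (m : ℕ) : sympJ m ℂ * sympJ m ℂ = -1 := by
  have h : (Matrix.fromBlocks (-1) 0 0 (-1) : Matrix (Fin m ⊕ Fin m) (Fin m ⊕ Fin m) ℂ) = -1 := by
    rw [← Matrix.fromBlocks_one, Matrix.fromBlocks_neg, neg_zero]
  simp only [sympJ, Matrix.reindex_apply, Matrix.submatrix_mul_equiv, Matrix.fromBlocks_multiply]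
  simp only [mul_zero, zero_add, mul_one, add_zero, mul_neg, neg_zero, h,
    Matrix.submatrix_neg, Pi.neg_apply, Matrix.submatrix_one_equiv]

/-- For any `d × d` complex matrix `A` with `d = 2m ≥ 4` even and `J` the
canonical symplectic form, the entrywise Haar average over `U(d)` of
`(J Uᵀ Jᵀ U) A (J Uᵀ Jᵀ U)†` equals `(tr(A)·𝟙 + J Aᵀ J)/(d−1)`. -/
theorem haar_unitary_AII_twirl
    (m : ℕ) (hm : 2 ≤ m) (A : Matrix (Fin (2 * m)) (Fin (2 * m)) ℂ)
    (μ : Measure (Matrix.unitaryGroup (Fin (2 * m)) ℂ))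
    [μ.IsHaarMeasure] [IsProbabilityMeasure μ]
    (i j : Fin (2 * m)) :
    (∫ U : Matrix.unitaryGroup (Fin (2 * m)) ℂ,
        ((sympJ m ℂ * (U : Matrix (Fin (2 * m)) (Fin (2 * m)) ℂ)ᵀ * (sympJ m ℂ)ᵀ *
            (U : Matrix (Fin (2 * m)) (Fin (2 * m)) ℂ)) * A *
          (sympJ m ℂ * (U : Matrix (Fin (2 * m)) (Fin (2 * m)) ℂ)ᵀ * (sympJ m ℂ)ᵀ *
            (U : Matrix (Fin (2 * m)) (Fin (2 * m)) ℂ))ᴴ) i j ∂μ)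
      = (((2 * (m : ℂ) - 1)⁻¹ •
          (A.trace • (1 : Matrix (Fin (2 * m)) (Fin (2 * m)) ℂ) + sympJ m ℂ * Aᵀ * sympJ m ℂ)) i j) := by
  have := unitaryGroup_isMulRightInvariant μ
  have hK : ((sympJ m ℂ)ᵀ)ᵀ = -(sympJ m ℂ)ᵀ := by
    rw [Matrix.transpose_transpose, sympJ_transpose, neg_neg]
  have hKu : (sympJ m ℂ)ᵀ ∈ Matrix.unitaryGroup (Fin (2 * m)) ℂ := by
    rw [Matrix.mem_unitaryGroup_iff, Matrix.star_eq_conjTranspose, sympJ_transpose,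
      Matrix.conjTranspose_neg, sympJ_conjTranspose, neg_neg, neg_mul, sympJ_mul_self, neg_neg]
  have hJ : sympJ m ℂ * (A.trace • (1 : Matrix (Fin (2 * m)) (Fin (2 * m)) ℂ) - Aᵀ) *
      (sympJ m ℂ)ᴴ = A.trace • (1 : Matrix (Fin (2 * m)) (Fin (2 * m)) ℂ) +
        sympJ m ℂ * Aᵀ * sympJ m ℂ := by
    rw [sympJ_conjTranspose, Matrix.mul_sub, Matrix.sub_mul]
    simp [sympJ_mul_self]
  have h := integral_twirl hK hKu μ (sympJ m ℂ) A i j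
  rw [hJ] at h
  simp only [Fintype.card_fin, Nat.cast_mul, Nat.cast_ofNat] at h
  rw [← h]
  congr 1
  ext U
  simp only [conjForm, Matrix.conjTranspose_mul, Matrix.mul_assoc]
end

section
/- Let d ≥ 4 be an integer. Then the average over the Haar probability measure on the real orthogonal group O(d) of the total variation distance between the Born distribution of the first column and the constant distribution is exactly ∫_{O(d)} (1/2)·∑_{x=0}^{d−1} | (O_{x,0})² − 1/d | dμ(O) = (2·Γ(d/2)/(√(πd)·Γ((d−1)/2)))·(1 − 1/d)^{(d−1)/2}. -/
/-!
Write `q v = ∑ i, v i ^ 2`. By left invariance of Haar measure, `⟪w, O e₀⟫` has the same law for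
every unit vector `w`, so for every `v` the Haar average of `|⟪v, O e₀⟫ ^ 2 - q v / d|` is `q v`
times the Haar average `I` of `|O x 0 ^ 2 - 1 / d|` (`lintegral_haar_form`). Integrating this against
`exp (-q v)`, exchanging the integrals and using the rotation invariance of Lebesgue measure gives
(`lintegral_haar_mul_gaussian`)
`I * ∫ q v * exp (-q v) dv = ∫ |u 0 ^ 2 - q u / d| * exp (-q u) du`.

The integral on the left is a radial Gaussian moment (`lintegral_sqrt_pow_mul_exp_neg`). On the
right, write `u = (t, y)` with `y ∈ ℝ ^ (d - 1)` and substitute `t = |y| s`; the integral factors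
into a radial moment in `y` and the one-dimensional integral of
`|s ^ 2 - (s ^ 2 + 1) / d| * (1 + s ^ 2) ^ (-(d + 2) / 2)` (`lintegral_gaussian_abs`). The latter is
elementary, because `s * (1 + s ^ 2) ^ (-d / 2) / d` is an antiderivative of the integrand up to sign
(`lintegral_abs_slope`).

Lower Lebesgue integrals are used throughout, so that integrability of the integrands is a consequence
of the computation rather than a prerequisite.
-/

open MeasureTheory Matrix

/-! ### Gaussian integrals -/

/-- Radial moments of the Gaussian weight `exp (-|v| ^ 2)` on `ℝ ^ n`, by polar coordinates. -/
theorem lintegral_sqrt_pow_mul_exp_neg (n k : ℕ) (hn : 0 < n) :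
    ∫⁻ v : Fin n → ℝ, ENNReal.ofReal (√(∑ i, v i ^ 2) ^ k * Real.exp (-∑ i, v i ^ 2))
      = ENNReal.ofReal (√Real.pi ^ n * Real.Gamma (((n : ℝ) + k) / 2) / Real.Gamma ((n : ℝ) / 2)) := by
  have : Nonempty (Fin n) := ⟨⟨0, hn⟩⟩
  have hexp : ∀ y ∈ Set.Ioi (0 : ℝ), y ^ (n - 1) • (y ^ k * Real.exp (-y ^ 2))
      = y ^ ((n : ℝ) + k - 1) * Real.exp (-y ^ (2 : ℝ)) := by
    intro y hy
    have hy : 0 < y := hy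
    have h1 : (n : ℝ) + k - 1 = ((n - 1 + k : ℕ) : ℝ) := by
      rw [Nat.cast_add, Nat.cast_sub hn]; push_cast; ring
    rw [h1, Real.rpow_natCast, Real.rpow_two, smul_eq_mul, pow_add]
    ring
  have hq : -1 < (n : ℝ) + k - 1 := by
    have : (0 : ℝ) < n := by exact_mod_cast hn
    have : (0 : ℝ) ≤ k := by positivity
    linarith
  have hdim : Module.finrank ℝ (EuclideanSpace ℝ (Fin n)) = n := by simp
  have hint : Integrable (fun v : EuclideanSpace ℝ (Fin n) ↦
      (fun y : ℝ ↦ y ^ k * Real.exp (-y ^ 2)) ‖v‖) volume := by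
    refine (integrable_fun_norm_addHaar volume (f := fun y : ℝ ↦ y ^ k * Real.exp (-y ^ 2))).2 ?_
    rw [hdim, integrableOn_congr_fun hexp measurableSet_Ioi]
    exact integrableOn_rpow_mul_exp_neg_rpow hq (by norm_num)
  have hval := integral_fun_norm_addHaar (volume : Measure (EuclideanSpace ℝ (Fin n)))
    (fun y : ℝ ↦ y ^ k * Real.exp (-y ^ 2))
  rw [hdim, setIntegral_congr_fun measurableSet_Ioi hexp,
    integral_rpow_mul_exp_neg_rpow (by norm_num) hq, Measure.real, EuclideanSpace.volume_ball] at hval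
  have hpos : ∀ v : EuclideanSpace ℝ (Fin n), 0 ≤ ‖v‖ ^ k * Real.exp (-‖v‖ ^ 2) :=
    fun v ↦ by positivity
  have hL := ofReal_integral_eq_lintegral_ofReal hint (Filter.Eventually.of_forall hpos)
  rw [hval] at hL
  have hmp := (PiLp.volume_preserving_toLp (Fin n)).lintegral_comp_emb
    (MeasurableEquiv.toLp 2 _).measurableEmbedding
    (fun v : EuclideanSpace ℝ (Fin n) ↦ ENNReal.ofReal (‖v‖ ^ k * Real.exp (-‖v‖ ^ 2)))
  rw [← hL] at hmp
  have hsq : ∀ v : Fin n → ℝ, √(∑ i, v i ^ 2) ^ 2 = ∑ i, v i ^ 2 := fun v ↦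
    Real.sq_sqrt (Finset.sum_nonneg fun i _ ↦ sq_nonneg _)
  simp only [EuclideanSpace.norm_eq, Real.norm_eq_abs, sq_abs, hsq] at hmp
  rw [hmp]
  congr 1
  have hn' : (n : ℝ) ≠ 0 := by positivity
  have hG : Real.Gamma ((n : ℝ) / 2) ≠ 0 := (Real.Gamma_pos_of_pos (by positivity)).ne'
  have hG2 : Real.Gamma ((n : ℝ) / 2 + 1) = (n : ℝ) / 2 * Real.Gamma ((n : ℝ) / 2) :=
    Real.Gamma_add_one (by positivity)
  simp only [ENNReal.ofReal_one, one_pow, one_mul, Fintype.card_fin, nsmul_eq_mul, smul_eq_mul]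
  rw [hG2, ENNReal.toReal_ofReal (by positivity)]
  have : ((n : ℝ) + k - 1 + 1) / 2 = (n + k) / 2 := by ring
  rw [this]
  field_simp

/-- The integrand is even and is, up to sign, the derivative of
`F s = s * (1 + s ^ 2) ^ (-d / 2) / d`. On `[0, ∞)` this `F` increases from `0` up to
`s₀ = 1 / √(d - 1)` and then decreases back to `0`, so the integral is `4 * F s₀`. -/
theorem lintegral_abs_slope (d : ℝ) (hd : 2 ≤ d) :
    ∫⁻ s : ℝ, ENNReal.ofReal (|s ^ 2 - (s ^ 2 + 1) / d| * (1 + s ^ 2) ^ (-(d + 2) / 2))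
      = ENNReal.ofReal (4 / (d * √d) * (1 - 1 / d) ^ ((d - 1) / 2)) := by
  set F : ℝ → ℝ := fun s ↦ 1 / d * (s * (1 + s ^ 2) ^ (-d / 2)) with hF
  set DF : ℝ → ℝ := fun s ↦ ((s ^ 2 + 1) / d - s ^ 2) * (1 + s ^ 2) ^ (-(d + 2) / 2) with hDF
  have hd0 : 0 < d := by linarith
  have hderiv : ∀ s, HasDerivAt F (DF s) s := by
    intro s
    have hb : 0 < 1 + s ^ 2 := by positivity
    have h1 : HasDerivAt (fun s : ℝ ↦ 1 + s ^ 2) (2 * s) s := by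
      simpa using (hasDerivAt_pow 2 s).const_add 1
    have h2 := ((hasDerivAt_id s).mul (h1.rpow_const (p := -d / 2) (Or.inl hb.ne'))).const_mul (1 / d)
    refine h2.congr_deriv ?_
    have e1 : (1 + s ^ 2) ^ (-d / 2) = (1 + s ^ 2) * (1 + s ^ 2) ^ (-(d + 2) / 2) := by
      rw [mul_comm, ← Real.rpow_add_one hb.ne']; congr 1; ring
    have e2 : -d / 2 - 1 = -(d + 2) / 2 := by ring
    simp only [hDF, id, e1, e2]
    field_simp
    ring
  have hcont' : Continuous DF := by
    refine Continuous.mul (by fun_prop) ?_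
    exact Continuous.rpow_const (by fun_prop) fun s ↦ Or.inl (by positivity)
  have hnonneg : ∀ s, 0 < s → 0 ≤ F s := fun s hs ↦ by positivity
  have hlim : Filter.Tendsto F Filter.atTop (nhds 0) := by
    have hbd : ∀ s : ℝ, 1 ≤ s → F s ≤ s⁻¹ := by
      intro s hs
      have h1 : (1 + s ^ 2) ^ (-d / 2) ≤ (1 + s ^ 2) ^ (-1 : ℝ) :=
        Real.rpow_le_rpow_of_exponent_le (by nlinarith) (by linarith)
      have h2 : (1 + s ^ 2) ^ (-1 : ℝ) ≤ (s ^ 2)⁻¹ := by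
        rw [Real.rpow_neg_one]
        exact inv_anti₀ (by positivity) (by linarith)
      have h3 : 1 / d ≤ 1 := by rw [div_le_one hd0]; linarith
      calc F s ≤ 1 * (s * (s ^ 2)⁻¹) := by
            simp only [hF]; gcongr; exact h1.trans h2
        _ = s⁻¹ := by field_simp
    refine tendsto_of_tendsto_of_tendsto_of_le_of_le' tendsto_const_nhds tendsto_inv_atTop_zero ?_ ?_
    · filter_upwards [Filter.eventually_gt_atTop 0] with s hs using hnonneg s hs
    · filter_upwards [Filter.eventually_ge_atTop 1] with s hs using hbd s hs
  set s₀ : ℝ := 1 / √(d - 1) with hs₀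
  have hd1 : 0 < d - 1 := by linarith
  have hs₀pos : 0 < s₀ := by positivity
  have hs₀sq : s₀ ^ 2 = 1 / (d - 1) := by rw [hs₀, div_pow, Real.sq_sqrt hd1.le]; simp
  have hbig : ∀ s, s₀ < s → DF s ≤ 0 := by
    intro s hs
    have : s₀ ^ 2 < s ^ 2 := by gcongr
    refine mul_nonpos_of_nonpos_of_nonneg ?_ (by positivity)
    rw [hs₀sq, div_lt_iff₀ hd1] at this
    rw [sub_nonpos, div_le_iff₀ hd0]; linarith
  have hsmall : ∀ s, 0 ≤ s → s ≤ s₀ → 0 ≤ DF s := by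
    intro s h0 hs
    have : s ^ 2 ≤ s₀ ^ 2 := by gcongr
    refine mul_nonneg ?_ (by positivity)
    rw [hs₀sq, le_div_iff₀ hd1] at this
    rw [sub_nonneg, le_div_iff₀ hd0]; linarith
  have hI1 : IntegrableOn DF (Set.Ioi s₀) :=
    integrableOn_Ioi_deriv_of_nonpos' (fun s _ ↦ hderiv s) (fun s hs ↦ hbig s hs) hlim
  have hV1 : ∫ s in Set.Ioi s₀, DF s = 0 - F s₀ :=
    integral_Ioi_of_hasDerivAt_of_nonpos' (fun s _ ↦ hderiv s) (fun s hs ↦ hbig s hs) hlim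
  have hV2 : ∫ s in Set.Ioc 0 s₀, DF s = F s₀ := by
    rw [← intervalIntegral.integral_of_le hs₀pos.le,
      intervalIntegral.integral_eq_sub_of_hasDerivAt (fun s _ ↦ hderiv s)
        (hcont'.intervalIntegrable _ _)]
    simp [hF]
  have hI2 : IntegrableOn DF (Set.Ioc 0 s₀) :=
    (hcont'.intervalIntegrable 0 s₀).1
  have hA : ∀ s, |s ^ 2 - (s ^ 2 + 1) / d| * (1 + s ^ 2) ^ (-(d + 2) / 2) = |DF (|s|)| := by
    intro s
    have : 0 ≤ (1 + s ^ 2) ^ (-(d + 2) / 2) := by positivity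
    simp only [hDF, abs_mul, sq_abs, abs_of_nonneg this]
    rw [abs_sub_comm]
  have hIoi : ∫ s in Set.Ioi 0, |DF s| = 2 * F s₀ := by
    rw [← Set.Ioc_union_Ioi_eq_Ioi hs₀pos.le,
      setIntegral_union (Set.Ioc_disjoint_Ioi le_rfl) measurableSet_Ioi hI2.abs hI1.abs,
      setIntegral_congr_fun measurableSet_Ioc (g := DF)
        (fun s hs ↦ abs_of_nonneg (hsmall s hs.1.le hs.2)),
      setIntegral_congr_fun measurableSet_Ioi (g := fun s ↦ - DF s)
        (fun s hs ↦ abs_of_nonpos (hbig s hs)), integral_neg, hV1, hV2]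
    ring
  have hIabs : Integrable (fun s ↦ |DF (|s|)|) := by
    -- A nonintegrable function has Bochner integral `0`, whereas this one has integral `4 * F s₀ > 0`.
    refine Integrable.of_integral_ne_zero ?_
    rw [integral_comp_abs (f := fun s ↦ |DF s|), hIoi]
    have : 0 < F s₀ := by positivity
    positivity
  simp_rw [hA]
  rw [← ofReal_integral_eq_lintegral_ofReal hIabs (Filter.Eventually.of_forall fun _ ↦ abs_nonneg _),
    integral_comp_abs (f := fun s ↦ |DF s|), hIoi]
  congr 1
  simp only [hF]
  have hx : 1 + s₀ ^ 2 = (1 - 1 / d)⁻¹ := by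
    rw [hs₀sq]; field_simp; ring
  have hy : 1 - 1 / d = (d - 1) / d := by field_simp
  have hy0 : 0 < 1 - 1 / d := by rw [hy]; positivity
  have h1 : (1 + s₀ ^ 2) ^ (-d / 2) = √(1 - 1 / d) * (1 - 1 / d) ^ ((d - 1) / 2) := by
    rw [hx, Real.inv_rpow hy0.le, ← Real.rpow_neg hy0.le, Real.sqrt_eq_rpow, ← Real.rpow_add hy0]
    congr 1; ring
  rw [h1]
  have h2 : √(1 - 1 / d) = √(d - 1) / √d := by rw [hy, Real.sqrt_div hd1.le]
  rw [h2, hs₀]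
  have : √(d - 1) ≠ 0 := by positivity
  field_simp
  ring

theorem lintegral_smul_eq {n : ℕ} {r : ℝ} (hr : 0 < r) {f : (Fin n → ℝ) → ENNReal}
    (hf : Measurable f) :
    ∫⁻ v : Fin n → ℝ, f (r • v) = ENNReal.ofReal ((r ^ n)⁻¹) * ∫⁻ v, f v := by
  rw [← lintegral_map (μ := volume) hf (measurable_const_smul r), Measure.map_addHaar_smul _ hr.ne',
    lintegral_smul_measure]
  simp [abs_of_pos hr]

theorem lintegral_mul_eq {r : ℝ} (hr : 0 < r) {f : ℝ → ENNReal} (hf : Measurable f) :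
    ∫⁻ t, f t = ENNReal.ofReal r * ∫⁻ s, f (r * s) := by
  rw [← lintegral_map (μ := volume) hf (measurable_const_mul r), Real.map_volume_mul_left hr.ne',
    lintegral_smul_measure, smul_eq_mul, ← mul_assoc, ← ENNReal.ofReal_mul hr.le,
    abs_of_pos (inv_pos.2 hr), mul_inv_cancel₀ hr.ne']
  simp

/-- Splitting `u = (t, y)` and substituting `t = |y| s` separates the integral: for fixed `s` the
`y`-integral is a third radial moment, up to the scaling `y ↦ √(1 + s ^ 2) y`. -/
theorem lintegral_gaussian_abs (n : ℕ) (hn : 0 < n) :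
    ∫⁻ u : Fin (n + 1) → ℝ, ENNReal.ofReal
        (|u 0 ^ 2 - (∑ i, u i ^ 2) / ((n + 1 : ℕ) : ℝ)| * Real.exp (-∑ i, u i ^ 2))
      = (∫⁻ s : ℝ, ENNReal.ofReal (|s ^ 2 - (s ^ 2 + 1) / ((n + 1 : ℕ) : ℝ)| *
          (1 + s ^ 2) ^ (-(((n + 1 : ℕ) : ℝ) + 2) / 2))) *
        ∫⁻ y : Fin n → ℝ, ENNReal.ofReal (√(∑ i, y i ^ 2) ^ 3 * Real.exp (-∑ i, y i ^ 2)) := by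
  set D : ℝ := ((n + 1 : ℕ) : ℝ) with hD
  have hmp := (volume_preserving_piFinSuccAbove (fun _ : Fin (n + 1) ↦ ℝ) 0).symm.lintegral_comp_emb
    (MeasurableEquiv.measurableEmbedding _) (fun u : Fin (n + 1) → ℝ ↦ ENNReal.ofReal
        (|u 0 ^ 2 - (∑ i, u i ^ 2) / D| * Real.exp (-∑ i, u i ^ 2)))
  rw [← hmp, Measure.volume_eq_prod, lintegral_prod_symm _ (by fun_prop)]
  simp only [MeasurableEquiv.piFinSuccAbove_symm_apply, Fin.insertNthEquiv_apply, Fin.insertNth_zero,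
    Fin.sum_univ_succ, Fin.cons_zero, Fin.cons_succ, cast_eq]
  have hq0 : ∀ y : Fin n → ℝ, 0 ≤ ∑ i, y i ^ 2 := fun y ↦ Finset.sum_nonneg fun i _ ↦ sq_nonneg _
  have hae : ∀ᵐ y : Fin n → ℝ, 0 < √(∑ i, y i ^ 2) := by
    have : Nonempty (Fin n) := ⟨⟨0, hn⟩⟩
    filter_upwards [Measure.ae_ne volume (0 : Fin n → ℝ)] with y hy
    refine Real.sqrt_pos.2 ((hq0 y).lt_of_ne fun h ↦ hy ?_)
    ext i
    have := (Finset.sum_eq_zero_iff_of_nonneg (fun i _ ↦ sq_nonneg (y i))).1 h.symm i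
      (Finset.mem_univ i)
    simpa using this
  have hstep : ∀ᵐ y : Fin n → ℝ, ∫⁻ t : ℝ, ENNReal.ofReal (|t ^ 2 - (t ^ 2 + ∑ i, y i ^ 2) / D| *
        Real.exp (-(t ^ 2 + ∑ i, y i ^ 2)))
      = ∫⁻ s : ℝ, ENNReal.ofReal (|s ^ 2 - (s ^ 2 + 1) / D|) *
        ENNReal.ofReal (√(∑ i, y i ^ 2) ^ 3 * Real.exp (-((1 + s ^ 2) * ∑ i, y i ^ 2))) := by
    filter_upwards [hae] with y hy
    rw [lintegral_mul_eq hy (by fun_prop), ← lintegral_const_mul _ (by fun_prop)]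
    refine lintegral_congr fun s ↦ ?_
    rw [← ENNReal.ofReal_mul hy.le, ← ENNReal.ofReal_mul (abs_nonneg _)]
    congr 1
    have hr := Real.sq_sqrt (hq0 y)
    set r := √(∑ i, y i ^ 2)
    rw [← hr]
    have h1 : (r * s) ^ 2 - ((r * s) ^ 2 + r ^ 2) / D = r ^ 2 * (s ^ 2 - (s ^ 2 + 1) / D) := by ring
    have h2 : (r * s) ^ 2 + r ^ 2 = (1 + s ^ 2) * r ^ 2 := by ring
    rw [h1, h2, abs_mul, abs_of_nonneg (sq_nonneg r)]
    ring
  rw [lintegral_congr_ae hstep, lintegral_lintegral_swap (by unfold Function.uncurry; fun_prop),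
    ← lintegral_mul_const _ (by fun_prop)]
  refine lintegral_congr fun s ↦ ?_
  rw [lintegral_const_mul _ (by fun_prop), ENNReal.ofReal_mul (abs_nonneg _), mul_assoc]
  congr 1
  have hb : 0 < 1 + s ^ 2 := by positivity
  have hc : 0 < √(1 + s ^ 2) := Real.sqrt_pos.2 hb
  have hpt : ∀ y : Fin n → ℝ, ENNReal.ofReal
      (√(∑ i, y i ^ 2) ^ 3 * Real.exp (-((1 + s ^ 2) * ∑ i, y i ^ 2)))
      = ENNReal.ofReal ((√(1 + s ^ 2) ^ 3)⁻¹) *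
        (fun y : Fin n → ℝ ↦ ENNReal.ofReal (√(∑ i, y i ^ 2) ^ 3 * Real.exp (-∑ i, y i ^ 2)))
          (√(1 + s ^ 2) • y) := by
    intro y
    have h1 : ∑ i, (√(1 + s ^ 2) • y) i ^ 2 = (1 + s ^ 2) * ∑ i, y i ^ 2 := by
      simp only [Pi.smul_apply, smul_eq_mul, mul_pow, Real.sq_sqrt hb.le, Finset.mul_sum]
    simp only [h1]
    rw [← ENNReal.ofReal_mul (by positivity), Real.sqrt_mul hb.le]
    congr 1
    field_simp
  simp_rw [hpt]
  rw [lintegral_const_mul _ (by fun_prop), lintegral_smul_eq hc (f := fun y : Fin n → ℝ ↦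
    ENNReal.ofReal (√(∑ i, y i ^ 2) ^ 3 * Real.exp (-∑ i, y i ^ 2))) (by fun_prop), ← mul_assoc,
    ← ENNReal.ofReal_mul (by positivity)]
  congr 2
  rw [← mul_inv, ← pow_add, Real.sqrt_eq_rpow, ← Real.rpow_natCast, ← Real.rpow_mul hb.le,
    ← Real.rpow_neg hb.le]
  congr 1
  rw [hD]; push_cast; ring

/-! ### Averaging over the orthogonal group -/

theorem measurable_orthogonal_entry {d : ℕ} (i j : Fin d) :
    Measurable fun O : Matrix.orthogonalGroup (Fin d) ℝ ↦ (O : Matrix (Fin d) (Fin d) ℝ) i j :=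
  (measurable_pi_apply j).comp ((measurable_pi_apply (X := fun _ : Fin d ↦ Fin d → ℝ) i).comp
    measurable_subtype_coe)

theorem measurable_orthogonal_mul_left {d : ℕ} (Q : Matrix.orthogonalGroup (Fin d) ℝ) :
    Measurable fun O : Matrix.orthogonalGroup (Fin d) ℝ ↦ Q * O := by
  refine Measurable.subtype_mk (measurable_pi_lambda _ fun i ↦ measurable_pi_lambda _ fun j ↦ ?_)
  have : ∀ O : Matrix.orthogonalGroup (Fin d) ℝ,
      ((Q : Matrix (Fin d) (Fin d) ℝ) * (O : Matrix (Fin d) (Fin d) ℝ)) i j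
        = ∑ k, (Q : Matrix (Fin d) (Fin d) ℝ) i k * (O : Matrix (Fin d) (Fin d) ℝ) k j :=
    fun O ↦ Matrix.mul_apply
  simp only [this]
  exact Finset.measurable_sum _ fun k _ ↦ (measurable_orthogonal_entry k j).const_mul _

/-- The unit vector `w` is completed to an orthonormal basis, whose members are the rows of `Q`. -/
theorem exists_orthogonal_row {d : ℕ} (x : Fin d) (w : Fin d → ℝ) (hw : ∑ i, w i ^ 2 = 1) :
    ∃ Q : Matrix.orthogonalGroup (Fin d) ℝ, ∀ j, (Q : Matrix (Fin d) (Fin d) ℝ) x j = w j := by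
  have hnorm : ‖WithLp.toLp 2 w‖ = 1 := by
    simp [EuclideanSpace.norm_eq, hw]
  obtain ⟨b, hb⟩ := Orthonormal.exists_orthonormalBasis_extension_of_card_eq (𝕜 := ℝ)
    (E := EuclideanSpace ℝ (Fin d)) (ι := Fin d) (by simp) (v := fun _ ↦ WithLp.toLp 2 w)
    (s := {x}) (by
      refine ⟨fun _ ↦ hnorm, fun i j hij ↦ (hij (Subsingleton.elim i j)).elim⟩)
  refine ⟨⟨Matrix.of fun i j ↦ b i j, ?_⟩, fun j ↦ ?_⟩
  · rw [Matrix.mem_orthogonalGroup_iff]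
    ext i j
    have := orthonormal_iff_ite.1 b.orthonormal j i
    simp only [PiLp.inner_apply, RCLike.inner_apply, conj_trivial] at this
    simp only [Matrix.mul_apply, Matrix.transpose_apply, Matrix.of_apply, Matrix.one_apply,
      this, eq_comm (a := i)]
  · simp [hb x rfl]

theorem lintegral_orthogonal_mulVec {d : ℕ} (O : Matrix.orthogonalGroup (Fin d) ℝ)
    {f : (Fin d → ℝ) → ENNReal} (hf : Measurable f) :
    ∫⁻ v : Fin d → ℝ, f ((O : Matrix (Fin d) (Fin d) ℝ)ᵀ *ᵥ v) = ∫⁻ v, f v := by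
  have hdet : |(O : Matrix (Fin d) (Fin d) ℝ)ᵀ.det| = 1 := by
    have h := (Matrix.mem_orthogonalGroup_iff (Fin d) ℝ).1 O.2
    have h2 := congrArg Matrix.det h
    rw [Matrix.det_mul, Matrix.det_transpose, Matrix.det_one] at h2
    rw [Matrix.det_transpose]
    exact (abs_eq_abs.2 (by simpa using mul_self_eq_one_iff.1 h2)).trans abs_one
  have hdet0 : (O : Matrix (Fin d) (Fin d) ℝ)ᵀ.det ≠ 0 := fun h ↦ by simp [h] at hdet
  have hmap := Real.map_matrix_volume_pi_eq_smul_volume_pi hdet0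
  rw [abs_inv, hdet, inv_one, ENNReal.ofReal_one, one_smul] at hmap
  conv_rhs => rw [← hmap]
  rw [lintegral_map hf (LinearMap.continuous_on_pi _).measurable]
  simp

theorem sum_sq_orthogonal_mulVec {d : ℕ} (O : Matrix.orthogonalGroup (Fin d) ℝ) (v : Fin d → ℝ) :
    ∑ i, ((O : Matrix (Fin d) (Fin d) ℝ)ᵀ *ᵥ v) i ^ 2 = ∑ i, v i ^ 2 := by
  have h : (O : Matrix (Fin d) (Fin d) ℝ) * (O : Matrix (Fin d) (Fin d) ℝ)ᵀ = 1 :=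
    (Matrix.mem_orthogonalGroup_iff (Fin d) ℝ).1 O.2
  have : ∀ u : Fin d → ℝ, ∑ i, u i ^ 2 = u ⬝ᵥ u := fun u ↦ by
    simp [dotProduct, sq]
  rw [this, this, Matrix.dotProduct_mulVec, Matrix.vecMul_transpose, Matrix.mulVec_mulVec, h,
    Matrix.one_mulVec]

/-- The column `O e_j` enters through `⟪v, O e_j⟫ = (Oᵀ v) j`. For `v ≠ 0`, left translation by an
orthogonal matrix whose row `x` is `v / |v|` turns `O x j` into `⟪v, O e_j⟫ / |v|`. -/
theorem lintegral_haar_form {d : ℕ} (j : Fin d)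
    (μ : Measure (Matrix.orthogonalGroup (Fin d) ℝ)) [μ.IsHaarMeasure] (x : Fin d)
    (v : Fin d → ℝ) :
    ∫⁻ O : Matrix.orthogonalGroup (Fin d) ℝ, ENNReal.ofReal
        |((O : Matrix (Fin d) (Fin d) ℝ)ᵀ *ᵥ v) j ^ 2 - (∑ i, v i ^ 2) / d| ∂μ
      = ENNReal.ofReal (∑ i, v i ^ 2) * ∫⁻ O : Matrix.orthogonalGroup (Fin d) ℝ,
          ENNReal.ofReal |(O : Matrix (Fin d) (Fin d) ℝ) x j ^ 2 - 1 / d| ∂μ := by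
  have hmeas : Measurable fun O : Matrix.orthogonalGroup (Fin d) ℝ ↦
      ENNReal.ofReal |(O : Matrix (Fin d) (Fin d) ℝ) x j ^ 2 - 1 / d| :=
    (by fun_prop : Measurable fun t : ℝ ↦ ENNReal.ofReal |t ^ 2 - 1 / d|).comp
      (measurable_orthogonal_entry x j)
  have hq0 : 0 ≤ ∑ i, v i ^ 2 := Finset.sum_nonneg fun i _ ↦ sq_nonneg _
  rcases hq0.eq_or_lt with hq | hq
  · have hv : v = 0 := by
      ext i
      have := (Finset.sum_eq_zero_iff_of_nonneg (fun i _ ↦ sq_nonneg (v i))).1 hq.symm i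
        (Finset.mem_univ i)
      simpa using this
    simp [hv]
  · set r := √(∑ i, v i ^ 2) with hr
    have hr2 : r ^ 2 = ∑ i, v i ^ 2 := Real.sq_sqrt hq0
    have hrpos : 0 < r := Real.sqrt_pos.2 hq
    obtain ⟨Q, hQ⟩ := exists_orthogonal_row x (fun i ↦ r⁻¹ * v i) (by
      simp only [mul_pow, ← Finset.mul_sum, ← hr2]
      field_simp)
    have hinv : Measure.map (fun O ↦ Q * O) μ = μ := map_mul_left_eq_self μ Q
    conv_rhs => rw [← hinv, lintegral_map hmeas (measurable_orthogonal_mul_left Q)]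
    refine Eq.trans ?_ (lintegral_const_mul _ (hmeas.comp (measurable_orthogonal_mul_left Q)))
    refine lintegral_congr fun O ↦ ?_
    rw [← ENNReal.ofReal_mul hq0]
    congr 1
    have h1 : ((Q * O : Matrix.orthogonalGroup (Fin d) ℝ) : Matrix (Fin d) (Fin d) ℝ) x j
        = r⁻¹ * ((O : Matrix (Fin d) (Fin d) ℝ)ᵀ *ᵥ v) j := by
      rw [Submonoid.coe_mul, Matrix.mul_apply]
      simp only [hQ, Matrix.mulVec, dotProduct, Matrix.transpose_apply, Finset.mul_sum]
      exact Finset.sum_congr rfl fun k _ ↦ by ring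
    rw [h1, ← hr2, ← abs_of_nonneg (sq_nonneg r), ← abs_mul, abs_of_nonneg (sq_nonneg r)]
    congr 1
    field_simp

/-- Gaussian average of `lintegral_haar_form`: after Tonelli, the inner integral over `ℝ ^ d` does not
depend on `O`, by rotation invariance. -/
theorem lintegral_haar_mul_gaussian {d : ℕ} (j : Fin d)
    (μ : Measure (Matrix.orthogonalGroup (Fin d) ℝ)) [μ.IsHaarMeasure] [IsProbabilityMeasure μ]
    (x : Fin d) :
    (∫⁻ O : Matrix.orthogonalGroup (Fin d) ℝ,
          ENNReal.ofReal |(O : Matrix (Fin d) (Fin d) ℝ) x j ^ 2 - 1 / d| ∂μ) *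
        ∫⁻ v : Fin d → ℝ, ENNReal.ofReal (√(∑ i, v i ^ 2) ^ 2 * Real.exp (-∑ i, v i ^ 2))
      = ∫⁻ u : Fin d → ℝ, ENNReal.ofReal
          (|u j ^ 2 - (∑ i, u i ^ 2) / d| * Real.exp (-∑ i, u i ^ 2)) := by
  have hq0 : ∀ v : Fin d → ℝ, 0 ≤ ∑ i, v i ^ 2 := fun v ↦ Finset.sum_nonneg fun i _ ↦ sq_nonneg _
  rw [← lintegral_const_mul _ (by fun_prop)]
  have hentry : ∀ i, Measurable fun O : Matrix.orthogonalGroup (Fin d) ℝ ↦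
    (O : Matrix (Fin d) (Fin d) ℝ) i j := fun i ↦ measurable_orthogonal_entry i j
  have hlin : Measurable fun p : (Fin d → ℝ) × Matrix.orthogonalGroup (Fin d) ℝ ↦
      ((p.2 : Matrix (Fin d) (Fin d) ℝ)ᵀ *ᵥ p.1) j := by
    simp only [Matrix.mulVec, dotProduct, Matrix.transpose_apply]
    exact Finset.measurable_sum _ fun i _ ↦ ((hentry i).comp measurable_snd).mul
      ((measurable_pi_apply i).comp measurable_fst)
  calc _ = ∫⁻ v : Fin d → ℝ, ∫⁻ O : Matrix.orthogonalGroup (Fin d) ℝ, ENNReal.ofReal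
        (|((O : Matrix (Fin d) (Fin d) ℝ)ᵀ *ᵥ v) j ^ 2 - (∑ i, v i ^ 2) / d| *
          Real.exp (-∑ i, v i ^ 2)) ∂μ := by
        refine lintegral_congr fun v ↦ ?_
        have hv : Measurable fun O : Matrix.orthogonalGroup (Fin d) ℝ ↦
            ((O : Matrix (Fin d) (Fin d) ℝ)ᵀ *ᵥ v) j := hlin.comp measurable_prodMk_left
        simp_rw [ENNReal.ofReal_mul (abs_nonneg _)]
        rw [lintegral_mul_const _ (by fun_prop), lintegral_haar_form j μ x v,
          Real.sq_sqrt (hq0 v), ENNReal.ofReal_mul (hq0 v)]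
        ring
    _ = ∫⁻ O : Matrix.orthogonalGroup (Fin d) ℝ, (∫⁻ v : Fin d → ℝ, ENNReal.ofReal
        (|((O : Matrix (Fin d) (Fin d) ℝ)ᵀ *ᵥ v) j ^ 2 - (∑ i, v i ^ 2) / d| *
          Real.exp (-∑ i, v i ^ 2))) ∂μ := by
        refine lintegral_lintegral_swap (Measurable.aemeasurable ?_)
        unfold Function.uncurry
        fun_prop
    _ = ∫⁻ _O : Matrix.orthogonalGroup (Fin d) ℝ, (∫⁻ u : Fin d → ℝ, ENNReal.ofReal
          (|u j ^ 2 - (∑ i, u i ^ 2) / d| * Real.exp (-∑ i, u i ^ 2))) ∂μ := by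
        refine lintegral_congr fun O ↦ ?_
        have h := lintegral_orthogonal_mulVec O (f := fun u : Fin d → ℝ ↦ ENNReal.ofReal
          (|u j ^ 2 - (∑ i, u i ^ 2) / d| * Real.exp (-∑ i, u i ^ 2))) (by fun_prop)
        simpa only [sum_sq_orthogonal_mulVec] using h
    _ = _ := by simp

theorem lintegral_haar_entry (d : ℕ) (hd : 2 ≤ d) (j : Fin d) (hj : (j : ℕ) = 0)
    (μ : Measure (Matrix.orthogonalGroup (Fin d) ℝ)) [μ.IsHaarMeasure] [IsProbabilityMeasure μ]
    (x : Fin d) :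
    ∫⁻ O : Matrix.orthogonalGroup (Fin d) ℝ,
        ENNReal.ofReal |(O : Matrix (Fin d) (Fin d) ℝ) x j ^ 2 - 1 / d| ∂μ
      = ENNReal.ofReal (4 / (d * √d) * (1 - 1 / (d : ℝ)) ^ (((d : ℝ) - 1) / 2) *
          (Real.Gamma ((d : ℝ) / 2) / (√Real.pi * Real.Gamma (((d : ℝ) - 1) / 2)))) := by
  obtain ⟨n, rfl⟩ : ∃ n, d = n + 1 := ⟨d - 1, by omega⟩
  have hn : 0 < n := by omega
  obtain rfl : j = 0 := Fin.ext hj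
  have hD : (2 : ℝ) ≤ ((n + 1 : ℕ) : ℝ) := by exact_mod_cast hd
  have key := lintegral_haar_mul_gaussian 0 μ x
  rw [lintegral_gaussian_abs n hn, lintegral_abs_slope _ hD, lintegral_sqrt_pow_mul_exp_neg n 3 hn,
    lintegral_sqrt_pow_mul_exp_neg (n + 1) 2 n.succ_pos] at key
  have hG1 : 0 < Real.Gamma ((((n + 1 : ℕ) : ℝ) + (2 : ℕ)) / 2) :=
    Real.Gamma_pos_of_pos (by positivity)
  have hG2 : 0 < Real.Gamma (((n + 1 : ℕ) : ℝ) / 2) := Real.Gamma_pos_of_pos (by positivity)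
  have hG3 : 0 < Real.Gamma ((n : ℝ) / 2) := Real.Gamma_pos_of_pos (by positivity)
  have hpow : 0 ≤ (1 - 1 / ((n + 1 : ℕ) : ℝ)) ^ ((((n + 1 : ℕ) : ℝ) - 1) / 2) := by
    refine Real.rpow_nonneg ?_ _
    rw [sub_nonneg, div_le_one (by linarith)]
    linarith
  have hC : 0 < √Real.pi ^ (n + 1) * Real.Gamma ((((n + 1 : ℕ) : ℝ) + (2 : ℕ)) / 2) /
      Real.Gamma (((n + 1 : ℕ) : ℝ) / 2) := by positivity
  refine (ENNReal.mul_left_inj (ENNReal.ofReal_pos.2 hC).ne' ENNReal.ofReal_ne_top).1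
    (key.trans ?_)
  have e1 : ((n : ℝ) + (3 : ℕ)) / 2 = (((n + 1 : ℕ) : ℝ) + (2 : ℕ)) / 2 := by push_cast; ring
  have e2 : (((n + 1 : ℕ) : ℝ) - 1) / 2 = (n : ℝ) / 2 := by push_cast; ring
  rw [e2] at hpow ⊢
  rw [← ENNReal.ofReal_mul (by positivity), ← ENNReal.ofReal_mul (by positivity), e1]
  congr 1
  have hpi : √Real.pi ≠ 0 := (Real.sqrt_pos.2 Real.pi_pos).ne'
  rw [pow_succ]
  field_simp

/-- For `d ≥ 4`, the Haar average over the real orthogonal group `O(d)`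
of the total variation distance between the Born distribution `x ↦ (O_{x,0})²` of the
first column and the constant distribution equals
`(2Γ(d/2)/(√(πd)Γ((d−1)/2)))·(1 − 1/d)^{(d−1)/2}` exactly. -/
theorem haar_orthogonal_expected_tvd
    (d : ℕ) (hd : 4 ≤ d)
    (μ : Measure (Matrix.orthogonalGroup (Fin d) ℝ))
    [μ.IsHaarMeasure] [IsProbabilityMeasure μ] :
    (∫ O : Matrix.orthogonalGroup (Fin d) ℝ,
        (1 / 2 : ℝ) * ∑ x : Fin d,
          |((O : Matrix (Fin d) (Fin d) ℝ) x ⟨0, by omega⟩) ^ 2 - 1 / d| ∂μ)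
      = (2 * Real.Gamma ((d : ℝ) / 2) / (Real.sqrt (Real.pi * d) * Real.Gamma (((d : ℝ) - 1) / 2)))
          * (1 - 1 / (d : ℝ)) ^ (((d : ℝ) - 1) / 2) := by
  have hentry := lintegral_haar_entry d (by omega) ⟨0, by omega⟩ rfl μ
  have hD : (4 : ℝ) ≤ d := by exact_mod_cast hd
  have hmeas : ∀ x : Fin d, Measurable fun O : Matrix.orthogonalGroup (Fin d) ℝ ↦
      |(O : Matrix (Fin d) (Fin d) ℝ) x ⟨0, by omega⟩ ^ 2 - 1 / d| := fun x ↦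
    (by fun_prop : Measurable fun t : ℝ ↦ |t ^ 2 - 1 / (d : ℝ)|).comp
      (measurable_orthogonal_entry x _)
  have hint : ∀ x : Fin d, Integrable (fun O : Matrix.orthogonalGroup (Fin d) ℝ ↦
      |(O : Matrix (Fin d) (Fin d) ℝ) x ⟨0, by omega⟩ ^ 2 - 1 / d|) μ := by
    intro x
    rw [← lintegral_ofReal_ne_top_iff_integrable (hmeas x).aestronglyMeasurable
      (Filter.Eventually.of_forall fun _ ↦ abs_nonneg _), hentry x]
    exact ENNReal.ofReal_ne_top
  have hG2 : 0 < Real.Gamma ((d : ℝ) / 2) := Real.Gamma_pos_of_pos (by positivity)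
  have hG3 : 0 < Real.Gamma (((d : ℝ) - 1) / 2) := Real.Gamma_pos_of_pos (by linarith)
  have hpow : 0 ≤ (1 - 1 / (d : ℝ)) ^ (((d : ℝ) - 1) / 2) := by
    refine Real.rpow_nonneg ?_ _
    rw [sub_nonneg, div_le_one (by linarith)]
    linarith
  rw [integral_const_mul, integral_finsetSum _ fun x _ ↦ hint x]
  have hval : ∀ x : Fin d, ∫ O : Matrix.orthogonalGroup (Fin d) ℝ,
      |(O : Matrix (Fin d) (Fin d) ℝ) x ⟨0, by omega⟩ ^ 2 - 1 / d| ∂μ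
      = 4 / (d * √d) * (1 - 1 / (d : ℝ)) ^ (((d : ℝ) - 1) / 2) *
          (Real.Gamma ((d : ℝ) / 2) / (√Real.pi * Real.Gamma (((d : ℝ) - 1) / 2))) := by
    intro x
    rw [integral_eq_lintegral_of_nonneg_ae (Filter.Eventually.of_forall fun _ ↦ abs_nonneg _)
      (hmeas x).aestronglyMeasurable, hentry x, ENNReal.toReal_ofReal (by positivity)]
  simp only [hval, Finset.sum_const, Finset.card_univ, Fintype.card_fin, nsmul_eq_mul]
  rw [Real.sqrt_mul Real.pi_pos.le]
  field_simp
  ring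
end
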